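/- arXiv:math/0702791 — 2 statements merged into one kernel-verified Lean document; each statement's English description precedes it below -/
import Mathlib

section
/- Let β : ℝ → ℝ be nondecreasing with β(0) = 0, and let m ≥ 0 and δ > 0. Then there exists a constant C ≥ 0 such that for all r, r₀ ∈ ℝ with |r₀| ≤ m one has β(r)·(r − r₀) ≥ δ·|β(r)| − C. (One may take C = (2m + 2δ)·max(|β(m+δ)|, |β(−m−δ)|).) -/
/-- Kenmochi–Niezgódka–Pawłow type inequality: if `β : ℝ → ℝ` is nondecreasing with `β(0) = 0`,
`m ≥ 0` and `δ > 0`, then there is `C ≥ 0` such that for all `r, r₀` with `|r₀| ≤ m` one has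
`β(r)·(r − r₀) ≥ δ·|β(r)| − C`. -/
theorem knp_inequality (β : ℝ → ℝ) (hβ : Monotone β) (hβ0 : β 0 = 0)
    (m δ : ℝ) (hm : 0 ≤ m) (hδ : 0 < δ) :
    ∃ C : ℝ, 0 ≤ C ∧ ∀ r r₀ : ℝ, |r₀| ≤ m → β r * (r - r₀) ≥ δ * |β r| - C := by
  have hB : 0 ≤ β (m + δ) := hβ0 ▸ hβ (by linarith)
  have hA : β (-(m + δ)) ≤ 0 := hβ0 ▸ hβ (by linarith)
  have hs : 0 ≤ m + δ := by linarith
  have hsB := mul_nonneg hs hB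
  have hsA := mul_nonneg hs (neg_nonneg.mpr hA)
  refine ⟨(m + δ) * β (m + δ) + (m + δ) * -β (-(m + δ)), by linarith, ?_⟩
  intro r r₀ h
  obtain ⟨h1, h2⟩ := abs_le.mp h
  rcases le_total 0 r with hr | hr
  · have hb : 0 ≤ β r := hβ0 ▸ hβ hr
    rw [abs_of_nonneg hb]
    rcases le_total (m + δ) r with hr2 | hr2
    · have := mul_nonneg hb (show 0 ≤ r - r₀ - δ by linarith)
      linarith
    · have h3 := mul_nonneg hb (show 0 ≤ r - r₀ - δ + (m + δ) by linarith)
      have h4 := mul_le_mul_of_nonneg_left (hβ hr2) hs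
      linarith
  · have hb : β r ≤ 0 := hβ0 ▸ hβ hr
    rw [abs_of_nonpos hb]
    have hb' : 0 ≤ -β r := by linarith
    rcases le_total r (-(m + δ)) with hr2 | hr2
    · have := mul_nonneg hb' (show 0 ≤ r₀ - r - δ by linarith)
      linarith
    · have h3 := mul_nonneg hb' (show 0 ≤ r₀ - r - δ + (m + δ) by linarith)
      have h4 := mul_le_mul_of_nonneg_left (hβ hr2) hs
      linarith
end

section
/- Let a ≤ b, let ψ : ℝ → ℝ be continuous with ψ(r) > 0 for all r, and let y : ℝ → ℝ be differentiable on [a, b] with y'(t) ≤ ψ(y(t)) for all t ∈ [a, b]. Let C₁ ≤ C₂ and δ > 0 satisfy y(a) ≤ C₁ and ∫_{C₁}^{C₂} dr/ψ(r) ≥ δ. Then y(t) ≤ C₂ for every t ∈ [a, min(b, a + δ)]. -/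
open intervalIntegral Set

/-- Quantitative local regularization: if `ψ` is continuous and strictly positive, `y` is
differentiable on `[a, b]` with `y' ≤ ψ(y)` there, `y(a) ≤ C₁ ≤ C₂`, and
`∫_{C₁}^{C₂} dr/ψ(r) ≥ δ > 0`, then `y(t) ≤ C₂` on `[a, min(b, a + δ)]`. -/
theorem local_regularization_bound (a b : ℝ) (hab : a ≤ b)
    (ψ : ℝ → ℝ) (hψc : Continuous ψ) (hψpos : ∀ r : ℝ, 0 < ψ r)
    (y y' : ℝ → ℝ) (hy : ∀ t ∈ Icc a b, HasDerivAt y (y' t) t)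
    (hy' : ∀ t ∈ Icc a b, y' t ≤ ψ (y t))
    (C₁ C₂ δ : ℝ) (hC : C₁ ≤ C₂) (hδ : 0 < δ)
    (hya : y a ≤ C₁) (hint : δ ≤ ∫ r in C₁..C₂, 1 / ψ r) :
    ∀ t ∈ Icc a (min b (a + δ)), y t ≤ C₂ := by
  have hc : Continuous (fun r => 1 / ψ r) :=
    continuous_const.div hψc (fun r => (hψpos r).ne')
  have hΦ : ∀ s, HasDerivAt (fun s => ∫ r in C₁..s, 1 / ψ r) (1 / ψ s) s := fun s =>
    hc.integral_hasStrictDerivAt C₁ s |>.hasDerivAt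
  set Φ : ℝ → ℝ := fun s => ∫ r in C₁..s, 1 / ψ r with hΦdef
  have hmono : StrictMono Φ := by
    apply strictMono_of_deriv_pos
    intro s
    rw [(hΦ s).deriv]
    exact one_div_pos.mpr (hψpos s)
  have hd : ∀ t ∈ Icc a b,
      HasDerivAt (fun t => Φ (y t) - t) (1 / ψ (y t) * y' t - 1) t := fun t ht =>
    ((hΦ (y t)).comp t (hy t ht)).sub (hasDerivAt_id t)
  have hanti : AntitoneOn (fun t => Φ (y t) - t) (Icc a b) := by
    apply antitoneOn_of_deriv_nonpos (convex_Icc a b)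
    · exact fun t ht => (hd t ht).continuousAt.continuousWithinAt
    · exact fun t ht =>
        (hd t (interior_subset ht)).differentiableAt.differentiableWithinAt
    · intro t ht
      have ht' := interior_subset ht
      rw [(hd t ht').deriv]
      have h1 : 1 / ψ (y t) * y' t ≤ 1 := by
        rw [one_div_mul_eq_div, div_le_one (hψpos _)]
        exact hy' t ht'
      linarith
  intro t ht
  have htb : t ≤ b := ht.2.trans (min_le_left _ _)
  have htd : t ≤ a + δ := ht.2.trans (min_le_right _ _)
  have h1 : Φ (y t) - t ≤ Φ (y a) - a := hanti ⟨le_rfl, hab⟩ ⟨ht.1, htb⟩ ht.1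
  have h2 : Φ (y a) ≤ Φ C₁ := hmono.monotone hya
  have h3 : Φ C₁ = 0 := by simp [hΦdef]
  have h4 : δ ≤ Φ C₂ := hint
  exact hmono.le_iff_le.mp (by linarith)
end
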